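/- Let (Ω, 𝓕, P) be a probability space and B : [0,1] × Ω → ℝ a standard Brownian motion: B_0 = 0 almost surely, for 0 ≤ s ≤ t ≤ 1 the increment B_t − B_s is independent of (B_r)_{r ≤ s} and is Gaussian with mean 0 and variance t − s, and t ↦ B_t(ω) is continuous for almost every ω. Let f : ℝ → ℝ be smooth and bounded with bounded first and second derivatives. For n ∈ ℕ let t_i = i/n be the uniform partition of [0,1]. Then the random variables ∑_{i=0}^{n−1} f((B_{t_i} + B_{t_{i+1}})/2)(B_{t_{i+1}} − B_{t_i}) − ∑_{i=0}^{n−1} f(B_{t_i})(B_{t_{i+1}} − B_{t_i}) converge in L²(P), as n → ∞, to (1/2) ∫_0^1 f'(B_t) dt. -/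

import Mathlib

open Filter Finset MeasureTheory ProbabilityTheory

lemma aux_gauss_integrable (v : NNReal) (k : ℕ) :
    Integrable (fun x : ℝ => x ^ k) (gaussianReal 0 v) :=
  integrable_pow_of_mem_interior_integrableExpSet (X := fun x : ℝ => x) (by simp) k

lemma aux_gauss_moment (v : NNReal) (k : ℕ) :
    ∫ x, x ^ (2 * k) ∂(gaussianReal 0 v) = (v : ℝ) ^ k * ∫ x, x ^ (2 * k) ∂(gaussianReal 0 1) := by
  have h := gaussianReal_map_const_mul (μ := 0) (v := 1) (Real.sqrt v)
  have h2 : (NNReal.mk (Real.sqrt v ^ 2) (sq_nonneg _) * 1 : NNReal) = v := by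
    ext; simp
  rw [h2, mul_zero] at h
  rw [← h, integral_map (by fun_prop) (by fun_prop), ← integral_const_mul]
  congr 1; ext x
  rw [mul_pow, pow_mul (Real.sqrt v), Real.sq_sqrt v.coe_nonneg]

lemma aux_gauss_two (v : NNReal) : ∫ x, x ^ 2 ∂(gaussianReal 0 v) = v := by
  have h := variance_fun_id_gaussianReal (μ := 0) (v := v)
  rw [variance_eq_integral (by fun_prop)] at h
  simpa using h

lemma aux_taylor (f : ℝ → ℝ) (hf : ContDiff ℝ (⊤ : ℕ∞) f) (C : ℝ)
    (hC : ∀ a, |deriv (deriv f) a| ≤ C) (x h : ℝ) :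
    |f (x + h) - f x - deriv f x * h| ≤ C * h ^ 2 := by
  have hd : Differentiable ℝ f := hf.differentiable (by simp)
  have hd' : Differentiable ℝ (deriv f) :=
    ((contDiff_infty_iff_deriv.1 hf).2).differentiable (by simp)
  have hC0 : 0 ≤ C := (abs_nonneg _).trans (hC 0)
  have hL : ∀ a b, |deriv f b - deriv f a| ≤ C * |b - a| := fun a b =>
    convex_univ.norm_image_sub_le_of_norm_deriv_le (fun y _ => hd' y) (fun y _ => hC y)
      (Set.mem_univ a) (Set.mem_univ b)
  have := (convex_uIcc x (x+h)).norm_image_sub_le_of_norm_hasDerivWithin_le (C := C * |h|)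
    (f := fun y => f y - deriv f x * y) (f' := fun y => deriv f y - deriv f x)
    (fun y _ => ((hd y).hasDerivAt.sub
      (by simpa using (hasDerivAt_id y).const_mul (deriv f x))).hasDerivWithinAt)
    (fun y hy => (hL x y).trans (by
      have := Set.abs_sub_left_of_mem_uIcc hy
      exact mul_le_mul_of_nonneg_left (by simpa using this) hC0))
    (Set.left_mem_uIcc) (Set.right_mem_uIcc)
  simp only [Real.norm_eq_abs, add_sub_cancel_left] at this
  calc _ = |f (x + h) - deriv f x * (x + h) - (f x - deriv f x * x)| := by congr 1; ring
    _ ≤ C * |h| * |h| := this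
    _ = C * h ^ 2 := by rw [mul_assoc, abs_mul_abs_self]; ring

lemma aux_riemann (g : ℝ → ℝ) (hg : ContinuousOn g (Set.Icc 0 1)) :
    Tendsto (fun n : ℕ => ∑ i ∈ Finset.range n, g ((i : ℝ) / n) * (1 / n)) atTop
      (nhds (∫ t in (0:ℝ)..1, g t)) := by
  have huc := isCompact_Icc.uniformContinuousOn_of_continuous hg
  rw [Metric.uniformContinuousOn_iff_le] at huc
  rw [Metric.tendsto_atTop]
  intro ε hε
  obtain ⟨δ, hδ, H⟩ := huc (ε / 2) (by positivity)
  obtain ⟨N, hN⟩ := exists_nat_one_div_lt hδ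
  refine ⟨N + 1, fun n hn => ?_⟩
  have hn0 : (0:ℝ) < n := by exact_mod_cast (by omega : 0 < n)
  have hnδ : 1 / (n:ℝ) ≤ δ := by
    refine le_trans ?_ hN.le
    gcongr; exact_mod_cast hn
  have hsub : ∀ i < n, Set.Icc ((i:ℝ)/n) (((i+1:ℕ):ℝ)/n) ⊆ Set.Icc 0 1 := by
    intro i hi
    apply Set.Icc_subset_Icc (by positivity)
    rw [div_le_one hn0]; exact_mod_cast hi
  have hle : ∀ i : ℕ, (i:ℝ)/n ≤ ((i+1:ℕ):ℝ)/n := by intro i; gcongr; simp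
  have hint : ∀ i < n, IntervalIntegrable g volume ((i:ℝ)/n) (((i+1:ℕ):ℝ)/n) := by
    intro i hi
    apply ContinuousOn.intervalIntegrable
    rw [Set.uIcc_of_le (hle i)]
    exact hg.mono (hsub i hi)
  have hs := intervalIntegral.sum_integral_adjacent_intervals (a := fun i : ℕ => (i:ℝ)/n) hint
  simp only [Nat.cast_zero, zero_div, div_self hn0.ne'] at hs
  rw [← hs, Real.dist_eq, ← Finset.sum_sub_distrib]
  have key : ∀ i ∈ Finset.range n, |g ((i : ℝ) / n) * (1 / n) -
      ∫ t in ((i:ℝ)/n)..(((i+1:ℕ):ℝ)/n), g t| ≤ ε / 2 * (1 / n) := by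
    intro i hi
    have hi := Finset.mem_range.1 hi
    have hw : ((i+1:ℕ):ℝ)/n - (i:ℝ)/n = 1 / n := by push_cast; ring
    have h1 : g ((i : ℝ) / n) * (1 / n) = ∫ t in ((i:ℝ)/n)..(((i+1:ℕ):ℝ)/n), g ((i:ℝ)/n) := by
      rw [intervalIntegral.integral_const, hw, smul_eq_mul, mul_comm]
    rw [h1, ← intervalIntegral.integral_sub (by simp) (hint i hi)]
    have := intervalIntegral.norm_integral_le_of_norm_le_const (a := (i:ℝ)/n)
      (b := ((i+1:ℕ):ℝ)/n) (C := ε / 2) (f := fun t => g ((i:ℝ)/n) - g t) (by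
        intro t ht
        rw [Set.uIoc_of_le (hle i)] at ht
        have ht' := Set.Ioc_subset_Icc_self ht
        have := H ((i:ℝ)/n) (hsub i hi (Set.left_mem_Icc.2 (hle i))) t (hsub i hi ht') (by
          rw [dist_comm, Real.dist_eq, abs_of_nonneg (by linarith [ht.1])]
          linarith [ht.2])
        rwa [Real.dist_eq] at this)
    rwa [hw, abs_of_pos (by positivity)] at this
  calc _ ≤ ∑ i ∈ Finset.range n, ε / 2 * (1 / n) :=
        (Finset.abs_sum_le_sum_abs _ _).trans (Finset.sum_le_sum key)
    _ = ε / 2 := by simp; field_simp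
    _ < ε := by linarith

lemma aux_gauss_rv {Ω : Type*} [MeasurableSpace Ω] (P : Measure Ω) (D : Ω → ℝ)
    (hD : Measurable D) (v : NNReal) (h : Measure.map D P = gaussianReal 0 v) :
    (∀ k : ℕ, Integrable (fun ω => D ω ^ k) P) ∧ (∫ ω, D ω ^ 2 ∂P = v) ∧
    (∀ k : ℕ, ∫ ω, D ω ^ (2 * k) ∂P = (v : ℝ) ^ k * ∫ x, x ^ (2 * k) ∂(gaussianReal 0 1)) := by
  have e : ∀ k : ℕ, ∫ ω, D ω ^ k ∂P = ∫ x, x ^ k ∂(gaussianReal 0 v) := by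
    intro k
    rw [← h, integral_map hD.aemeasurable (by fun_prop)]
  refine ⟨fun k => ?_, ?_, fun k => ?_⟩
  · have := aux_gauss_integrable v k
    rw [← h] at this
    exact this.comp_measurable hD
  · rw [e, aux_gauss_two]
  · rw [e, aux_gauss_moment]

lemma aux_martingale {Ω : Type*} [MeasurableSpace Ω] (P : Measure Ω) [IsProbabilityMeasure P]
    (B : ℝ → Ω → ℝ)
    (hmeas : ∀ t, Measurable (B t))
    (hgauss : ∀ s t : ℝ, 0 ≤ s → s ≤ t → t ≤ 1 →
      Measure.map (fun ω => B t ω - B s ω) P = gaussianReal 0 (Real.toNNReal (t - s)))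
    (hindep : ∀ s t : ℝ, 0 ≤ s → s ≤ t → t ≤ 1 →
      IndepFun (fun ω => B t ω - B s ω) (fun ω => fun r : Set.Iic s => B r ω) P)
    (g : ℝ → ℝ) (hg : Measurable g) (C : ℝ) (hC : ∀ a, |g a| ≤ C)
    (n : ℕ) (hn : 0 < n) (k : ℕ) (hk : k ≤ n) :
    MemLp (fun ω => ∑ i ∈ Finset.range k, g (B ((i : ℝ) / n) ω) *
        ((B (((i : ℝ) + 1) / n) ω - B ((i : ℝ) / n) ω) ^ 2 - 1 / n)) 2 P ∧
    ∫ ω, (∑ i ∈ Finset.range k, g (B ((i : ℝ) / n) ω) *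
        ((B (((i : ℝ) + 1) / n) ω - B ((i : ℝ) / n) ω) ^ 2 - 1 / n)) ^ 2 ∂P ≤
      k * (C ^ 2 * (2 * ∫ x, x ^ (2 * 2) ∂(gaussianReal 0 1) + 2) * (1 / n) ^ 2) := by
  have hn0 : (0:ℝ) < n := by exact_mod_cast hn
  induction k with
  | zero => simp
  | succ k ih =>
    obtain ⟨ihm, ihb⟩ := ih (by omega)
    set S : Ω → ℝ := fun ω => ∑ i ∈ Finset.range k, g (B ((i : ℝ) / n) ω) *
        ((B (((i : ℝ) + 1) / n) ω - B ((i : ℝ) / n) ω) ^ 2 - 1 / n) with hS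
    set s : ℝ := (k:ℝ) / n with hs
    set t : ℝ := ((k:ℝ) + 1) / n with ht
    have hs0 : 0 ≤ s := by positivity
    have hst : s ≤ t := by rw [hs, ht]; gcongr; simp
    have ht1 : t ≤ 1 := by rw [ht, div_le_one hn0]; exact_mod_cast hk
    have hts : t - s = 1 / n := by rw [hs, ht]; ring
    set D : Ω → ℝ := fun ω => B t ω - B s ω with hD
    have hDm : Measurable D := (hmeas t).sub (hmeas s)
    obtain ⟨hDi, hD2, hDk⟩ := aux_gauss_rv P D hDm _ (hgauss s t hs0 hst ht1)
    have hv : ((t - s).toNNReal : ℝ) = 1 / n := by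
      rw [hts, Real.coe_toNNReal _ (by positivity)]
    rw [hv] at hD2
    simp only [hv] at hDk
    -- the centred square
    have hZm : Measurable (fun ω => D ω ^ 2 - 1 / (n:ℝ)) := by fun_prop
    have hZ0 : ∫ ω, (D ω ^ 2 - 1 / (n:ℝ)) ∂P = 0 := by
      rw [integral_sub (hDi 2) (integrable_const _), hD2]; simp
    have hZle : ∀ ω, (D ω ^ 2 - 1 / (n:ℝ)) ^ 2 ≤ 2 * D ω ^ (2 * 2) + 2 * (1 / (n:ℝ)) ^ 2 := by
      intro ω; nlinarith [sq_nonneg (D ω ^ 2 + 1 / (n:ℝ))]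
    have hC0 : 0 ≤ C := (abs_nonneg _).trans (hC 0)
    set Y : Ω → ℝ := fun ω => g (B s ω) * (D ω ^ 2 - 1 / (n:ℝ)) with hY
    have hYm : Measurable Y := (hg.comp (hmeas s)).mul hZm
    have hYle : ∀ ω, Y ω ^ 2 ≤ C ^ 2 * (2 * D ω ^ (2 * 2) + 2 * (1 / (n:ℝ)) ^ 2) := by
      intro ω
      rw [hY]; simp only [mul_pow]
      exact mul_le_mul (sq_le_sq' (abs_le.1 (hC _)).1 (abs_le.1 (hC _)).2) (hZle ω)
        (sq_nonneg _) (sq_nonneg _)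
    have hbi : Integrable (fun ω => C ^ 2 * (2 * D ω ^ (2 * 2) + 2 * (1 / (n:ℝ)) ^ 2)) P :=
      (((hDi _).const_mul 2).add (integrable_const _)).const_mul _
    have hY2i : Integrable (fun ω => Y ω ^ 2) P :=
      hbi.mono' (hYm.pow_const 2).aestronglyMeasurable
        (ae_of_all _ fun ω => by rw [Real.norm_eq_abs, abs_of_nonneg (sq_nonneg _)]; exact hYle ω)
    have hYL : MemLp Y 2 P := (memLp_two_iff_integrable_sq hYm.aestronglyMeasurable).2 hY2i
    have hYb : ∫ ω, Y ω ^ 2 ∂P ≤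
        C ^ 2 * (2 * ∫ x, x ^ (2 * 2) ∂(gaussianReal 0 1) + 2) * (1 / n) ^ 2 := by
      refine (integral_mono hY2i hbi hYle).trans (le_of_eq ?_)
      rw [integral_const_mul, integral_add ((hDi _).const_mul 2) (integrable_const _),
        integral_const_mul, hDk 2]
      simp; ring
    -- orthogonality
    have hpath : ∀ r : ℝ, r ≤ s →
        Measurable[MeasurableSpace.comap (fun ω => fun r : Set.Iic s => B r ω) inferInstance]
          (B r) := by
      intro r hr
      have h1 : Measurable[MeasurableSpace.comap (fun ω => fun r : Set.Iic s => B r ω)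
        inferInstance] (fun ω => fun r : Set.Iic s => B r ω) := comap_measurable _
      exact (measurable_pi_apply (⟨r, hr⟩ : Set.Iic s)).comp h1
    have hSg : Measurable[MeasurableSpace.comap (fun ω => fun r : Set.Iic s => B r ω)
        inferInstance] (fun ω => S ω * g (B s ω)) := by
      refine Measurable.mul ?_ (hg.comp (hpath s le_rfl))
      refine Finset.measurable_fun_sum _ fun i hi => ?_
      have hi' := Finset.mem_range.1 hi
      have h1 : (i:ℝ)/n ≤ s := by rw [hs]; gcongr
      have h2 : ((i:ℝ)+1)/n ≤ s := by rw [hs]; gcongr; exact_mod_cast hi'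
      exact (hg.comp (hpath _ h1)).mul ((((hpath _ h2).sub (hpath _ h1)).pow_const 2).sub_const _)
    have hind : IndepFun (fun ω => D ω ^ 2 - 1 / (n:ℝ)) (fun ω => S ω * g (B s ω)) P := by
      have h1 := (hindep s t hs0 hst ht1)
      rw [IndepFun_iff_Indep] at h1
      have h2 : IndepFun D (fun ω => S ω * g (B s ω)) P := by
        rw [IndepFun_iff_Indep]
        exact indep_of_indep_of_le_right h1 hSg.comap_le
      exact h2.comp (φ := fun x : ℝ => x ^ 2 - 1 / (n:ℝ)) (ψ := id) (by fun_prop) measurable_id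
    have hSm : Measurable S := by
      refine Finset.measurable_fun_sum _ fun i hi => ?_
      exact (hg.comp (hmeas _)).mul ((((hmeas _).sub (hmeas _)).pow_const 2).sub_const _)
    have horth : ∫ ω, S ω * Y ω ∂P = 0 := by
      have h := hind.integral_fun_mul_eq_mul_integral hZm.aestronglyMeasurable
        (hSm.mul (hg.comp (hmeas s))).aestronglyMeasurable
      rw [hZ0, zero_mul] at h
      rw [← h]; congr 1; ext ω; simp only [hY]; ring
    have hsum : (fun ω => ∑ i ∈ Finset.range (k+1), g (B ((i : ℝ) / n) ω) *
        ((B (((i : ℝ) + 1) / n) ω - B ((i : ℝ) / n) ω) ^ 2 - 1 / n)) = fun ω => S ω + Y ω := by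
      ext ω; rw [Finset.sum_range_succ]
    have hsum' : ∀ ω, ∑ i ∈ Finset.range (k+1), g (B ((i : ℝ) / n) ω) *
        ((B (((i : ℝ) + 1) / n) ω - B ((i : ℝ) / n) ω) ^ 2 - 1 / n) = S ω + Y ω :=
      fun ω => congrFun hsum ω
    refine ⟨?_, ?_⟩
    · rw [hsum]; exact ihm.add hYL
    · simp only [hsum']
      have hSYi : Integrable (fun ω => S ω * Y ω) P := ihm.integrable_mul hYL
      have hS2i : Integrable (fun ω => S ω ^ 2) P := ihm.integrable_sq
      have e : ∀ ω, (S ω + Y ω) ^ 2 = S ω ^ 2 + Y ω ^ 2 + 2 * (S ω * Y ω) := fun ω => by ring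
      simp only [e]
      have hadd : Integrable (fun ω => S ω ^ 2 + Y ω ^ 2) P := hS2i.add hY2i
      rw [integral_add hadd (hSYi.const_mul 2), integral_add hS2i hY2i,
        integral_const_mul, horth]
      push_cast
      linarith [ihb, hYb]

/-- Itô–Stratonovich correction: for a standard Brownian motion `B` on `[0,1]` and a smooth
bounded `f` with bounded first and second derivatives, the difference between the midpoint
(Stratonovich) and left-point (Itô) Riemann sums along the uniform partition `t_i = i/n`
converges in `L²(P)` to `(1/2) ∫_0^1 f'(B_t) dt`. -/
theorem midpoint_sub_leftpoint_tendsto_ito_correction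
    {Ω : Type*} [MeasurableSpace Ω] (P : Measure Ω) [IsProbabilityMeasure P]
    (B : ℝ → Ω → ℝ)
    (hmeas : ∀ t, Measurable (B t))
    (hzero : ∀ᵐ ω ∂P, B 0 ω = 0)
    (hgauss : ∀ s t : ℝ, 0 ≤ s → s ≤ t → t ≤ 1 →
      Measure.map (fun ω => B t ω - B s ω) P = gaussianReal 0 (Real.toNNReal (t - s)))
    (hindep : ∀ s t : ℝ, 0 ≤ s → s ≤ t → t ≤ 1 →
      IndepFun (fun ω => B t ω - B s ω) (fun ω => fun r : Set.Iic s => B r ω) P)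
    (hcont : ∀ᵐ ω ∂P, ContinuousOn (fun t => B t ω) (Set.Icc 0 1))
    (f : ℝ → ℝ) (hf : ContDiff ℝ (⊤ : ℕ∞) f)
    (hfb : ∃ C, ∀ a, |f a| ≤ C)
    (hf1b : ∃ C, ∀ a, |deriv f a| ≤ C)
    (hf2b : ∃ C, ∀ a, |deriv (deriv f) a| ≤ C) :
    Tendsto (fun n : ℕ => ∫ ω,
      ((∑ i ∈ Finset.range n,
          f ((B ((i : ℝ) / n) ω + B (((i : ℝ) + 1) / n) ω) / 2)
            * (B (((i : ℝ) + 1) / n) ω - B ((i : ℝ) / n) ω))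
        - (∑ i ∈ Finset.range n,
            f (B ((i : ℝ) / n) ω) * (B (((i : ℝ) + 1) / n) ω - B ((i : ℝ) / n) ω))
        - (1 / 2) * ∫ t in (0:ℝ)..1, deriv f (B t ω)) ^ 2 ∂P)
      atTop (nhds 0) := by
  obtain ⟨C, hC⟩ := hf1b
  obtain ⟨K, hK⟩ := hf2b
  have hC0 : 0 ≤ C := (abs_nonneg _).trans (hC 0)
  have hK0 : 0 ≤ K := (abs_nonneg _).trans (hK 0)
  have hgc : Continuous (deriv f) := hf.continuous_deriv (by simp)
  have hgm : Measurable (deriv f) := hgc.measurable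
  -- the Riemann sums and their error
  set R : ℕ → Ω → ℝ := fun n ω =>
    ∑ i ∈ Finset.range n, deriv f (B ((i : ℝ) / n) ω) * (1 / n) with hR
  set I : Ω → ℝ := fun ω => ∫ t in (0:ℝ)..1, deriv f (B t ω) with hI
  have hRm : ∀ n, Measurable (R n) := fun n =>
    Finset.measurable_fun_sum _ fun i _ => (hgm.comp (hmeas _)).mul_const _
  have hRI : ∀ᵐ ω ∂P, Tendsto (fun n => R n ω) atTop (nhds (I ω)) := by
    filter_upwards [hcont] with ω hω
    exact aux_riemann (fun t => deriv f (B t ω)) (hgc.comp_continuousOn hω)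
  have hIm : AEStronglyMeasurable I P :=
    (aemeasurable_of_tendsto_metrizable_ae atTop (fun n => (hRm n).aemeasurable)
      hRI).aestronglyMeasurable
  have hRb : ∀ n ω, |R n ω| ≤ C := by
    intro n ω
    rcases Nat.eq_zero_or_pos n with rfl | hn
    · simpa [hR] using hC0
    have hn0 : (0:ℝ) < n := by exact_mod_cast hn
    calc |R n ω| ≤ ∑ i ∈ Finset.range n, C * (1 / n) := by
          refine (Finset.abs_sum_le_sum_abs _ _).trans (Finset.sum_le_sum fun i _ => ?_)
          rw [abs_mul, abs_of_pos (by positivity : (0:ℝ) < 1 / n)]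
          exact mul_le_mul_of_nonneg_right (hC _) (by positivity)
      _ = C := by simp; field_simp
  have hIb : ∀ ω, |I ω| ≤ C := by
    intro ω
    have := intervalIntegral.norm_integral_le_of_norm_le_const (a := 0) (b := 1) (C := C)
      (f := fun t => deriv f (B t ω)) (fun t _ => hC _)
    simpa using this
  have hEm : ∀ n, AEStronglyMeasurable (fun ω => (R n ω - I ω) ^ 2) P := fun n =>
    ((hRm n).aestronglyMeasurable.sub hIm).pow 2
  have hEb : ∀ n ω, ‖(R n ω - I ω) ^ 2‖ ≤ (2 * C) ^ 2 := by
    intro n ω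
    rw [Real.norm_eq_abs, abs_of_nonneg (sq_nonneg _)]
    have h1 := abs_le.1 (hRb n ω)
    have h2 := abs_le.1 (hIb ω)
    exact sq_le_sq' (by linarith) (by linarith)
  have hEi : ∀ n, Integrable (fun ω => (R n ω - I ω) ^ 2) P := fun n =>
    (integrable_const _).mono' (hEm n) (ae_of_all _ (hEb n))
  have hElim : Tendsto (fun n => ∫ ω, (R n ω - I ω) ^ 2 ∂P) atTop (nhds 0) := by
    have := tendsto_integral_of_dominated_convergence (μ := P)
      (F := fun n ω => (R n ω - I ω) ^ 2) (f := fun _ => (0:ℝ)) (fun _ => (2 * C) ^ 2)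
      hEm (integrable_const _) (fun n => ae_of_all _ (hEb n)) (by
        filter_upwards [hRI] with ω hω
        simpa using (hω.sub_const (I ω)).pow 2)
    simpa using this
  set M4 : ℝ := ∫ x, x ^ (2 * 2) ∂(gaussianReal 0 1) with hM4
  set M6 : ℝ := ∫ x, x ^ (2 * 3) ∂(gaussianReal 0 1) with hM6
  have hbound : ∀ n : ℕ, 0 < n → (∫ ω,
      ((∑ i ∈ Finset.range n,
          f ((B ((i : ℝ) / n) ω + B (((i : ℝ) + 1) / n) ω) / 2)
            * (B (((i : ℝ) + 1) / n) ω - B ((i : ℝ) / n) ω))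
        - (∑ i ∈ Finset.range n,
            f (B ((i : ℝ) / n) ω) * (B (((i : ℝ) + 1) / n) ω - B ((i : ℝ) / n) ω))
        - (1 / 2) * I ω) ^ 2 ∂P) ≤
      3 * (C ^ 2 * (2 * M4 + 2) * (1 / n)) + 3 * (K ^ 2 * M6 * (1 / n))
        + 3 * ∫ ω, (R n ω - I ω) ^ 2 ∂P := by
    intro n hn
    have hn0 : (0:ℝ) < n := by exact_mod_cast hn
    obtain ⟨hAL, hAb⟩ := aux_martingale P B hmeas hgauss hindep (deriv f) hgm C hC n hn n le_rfl
    set A : Ω → ℝ := fun ω => ∑ i ∈ Finset.range n, deriv f (B ((i : ℝ) / n) ω) *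
        ((B (((i : ℝ) + 1) / n) ω - B ((i : ℝ) / n) ω) ^ 2 - 1 / n) with hA
    have hA2 : Integrable (fun ω => A ω ^ 2) P := hAL.integrable_sq
    set D : ℕ → Ω → ℝ := fun i ω => B (((i : ℝ) + 1) / n) ω - B ((i : ℝ) / n) ω with hD
    have hDD : ∀ i ∈ Finset.range n, Integrable (fun ω => D i ω ^ 6) P ∧
        ∫ ω, D i ω ^ 6 ∂P = (1 / n) ^ 3 * M6 := by
      intro i hi
      have hi' := Finset.mem_range.1 hi
      have hw : ((i:ℝ) + 1) / n - (i:ℝ) / n = 1 / n := by ring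
      obtain ⟨h1, -, h3⟩ := aux_gauss_rv P (D i) ((hmeas _).sub (hmeas _)) _
        (hgauss ((i:ℝ)/n) (((i:ℝ)+1)/n) (by positivity) (by gcongr; simp)
          (by rw [div_le_one hn0]; exact_mod_cast hi'))
      refine ⟨h1 6, ?_⟩
      have := h3 3
      rwa [hw, Real.coe_toNNReal _ (by positivity)] at this
    set Q : Ω → ℝ := fun ω => ∑ i ∈ Finset.range n, D i ω ^ 6 with hQ
    have hQi : Integrable Q P := integrable_finsetSum _ fun i hi => (hDD i hi).1
    have hQv : ∫ ω, Q ω ∂P = n * ((1 / n) ^ 3 * M6) := by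
      rw [integral_finsetSum _ fun i hi => (hDD i hi).1,
        Finset.sum_congr rfl fun i hi => (hDD i hi).2]
      simp
    have hpt : ∀ ω, ((∑ i ∈ Finset.range n,
          f ((B ((i : ℝ) / n) ω + B (((i : ℝ) + 1) / n) ω) / 2)
            * (B (((i : ℝ) + 1) / n) ω - B ((i : ℝ) / n) ω))
        - (∑ i ∈ Finset.range n,
            f (B ((i : ℝ) / n) ω) * (B (((i : ℝ) + 1) / n) ω - B ((i : ℝ) / n) ω))
        - (1 / 2) * I ω) ^ 2 ≤
        3 * A ω ^ 2 + 3 * (K ^ 2 * n) * Q ω + 3 * (R n ω - I ω) ^ 2 := by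
      intro ω
      set T : ℕ → ℝ := fun i => (f (B ((i : ℝ) / n) ω + D i ω / 2) - f (B ((i : ℝ) / n) ω)
        - deriv f (B ((i : ℝ) / n) ω) * (D i ω / 2)) * D i ω with hT
      have hdec : (∑ i ∈ Finset.range n,
          f ((B ((i : ℝ) / n) ω + B (((i : ℝ) + 1) / n) ω) / 2)
            * (B (((i : ℝ) + 1) / n) ω - B ((i : ℝ) / n) ω))
        - (∑ i ∈ Finset.range n,
            f (B ((i : ℝ) / n) ω) * (B (((i : ℝ) + 1) / n) ω - B ((i : ℝ) / n) ω))
        - (1 / 2) * I ω = (1 / 2) * A ω + ∑ i ∈ Finset.range n, T i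
          + (1 / 2) * (R n ω - I ω) := by
        have : (∑ i ∈ Finset.range n,
          f ((B ((i : ℝ) / n) ω + B (((i : ℝ) + 1) / n) ω) / 2)
            * (B (((i : ℝ) + 1) / n) ω - B ((i : ℝ) / n) ω))
        - (∑ i ∈ Finset.range n,
            f (B ((i : ℝ) / n) ω) * (B (((i : ℝ) + 1) / n) ω - B ((i : ℝ) / n) ω)) =
            (1 / 2) * A ω + ∑ i ∈ Finset.range n, T i + (1 / 2) * R n ω := by
          simp only [hA, hR, Finset.mul_sum]
          rw [← Finset.sum_sub_distrib, ← Finset.sum_add_distrib, ← Finset.sum_add_distrib]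
          refine Finset.sum_congr rfl fun i _ => ?_
          have e : (B ((i : ℝ) / n) ω + B (((i : ℝ) + 1) / n) ω) / 2 =
            B ((i : ℝ) / n) ω + D i ω / 2 := by simp only [hD]; ring
          rw [e]
          simp only [hT, hD]
          ring
        rw [this]; ring
      have hTi : ∀ i, |T i| ^ 2 ≤ K ^ 2 * D i ω ^ 6 := by
        intro i
        have h := aux_taylor f hf K hK (B ((i : ℝ) / n) ω) (D i ω / 2)
        have h2 : |T i| ≤ K * |D i ω| ^ 3 := by
          rw [hT]; simp only [abs_mul]
          calc _ ≤ K * (D i ω / 2) ^ 2 * |D i ω| :=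
                mul_le_mul_of_nonneg_right h (abs_nonneg _)
            _ = K * |D i ω| ^ 3 / 4 := by rw [div_pow, ← sq_abs (D i ω)]; ring
            _ ≤ _ := by
              have : 0 ≤ K * |D i ω| ^ 3 := by positivity
              linarith
        calc |T i| ^ 2 ≤ (K * |D i ω| ^ 3) ^ 2 := by gcongr
          _ = K ^ 2 * |D i ω| ^ 6 := by ring
          _ = _ := by rw [Even.pow_abs (by decide)]
      have hTs : (∑ i ∈ Finset.range n, T i) ^ 2 ≤ K ^ 2 * n * Q ω := by
        calc (∑ i ∈ Finset.range n, T i) ^ 2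
            ≤ (Finset.range n).card * ∑ i ∈ Finset.range n, T i ^ 2 := sq_sum_le_card_mul_sum_sq
          _ ≤ n * ∑ i ∈ Finset.range n, K ^ 2 * D i ω ^ 6 := by
              rw [Finset.card_range]
              refine mul_le_mul_of_nonneg_left (Finset.sum_le_sum fun i _ => ?_) hn0.le
              rw [← sq_abs]; exact hTi i
          _ = _ := by rw [← Finset.mul_sum]; ring
      rw [hdec]
      set a := A ω
      set b := ∑ i ∈ Finset.range n, T i
      set c := R n ω - I ω
      have : (1 / 2 * a + b + 1 / 2 * c) ^ 2 ≤ 3 * a ^ 2 + 3 * b ^ 2 + 3 * c ^ 2 := by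
        nlinarith [sq_nonneg (a / 2 - b), sq_nonneg (a - c), sq_nonneg (b - c / 2),
          sq_nonneg a, sq_nonneg c]
      linarith
    have hi1 : Integrable (fun ω => 3 * A ω ^ 2) P := hA2.const_mul 3
    have hi2 : Integrable (fun ω => 3 * (K ^ 2 * n) * Q ω) P := hQi.const_mul _
    have hi3 : Integrable (fun ω => 3 * (R n ω - I ω) ^ 2) P := (hEi n).const_mul 3
    have hi12 : Integrable (fun ω => 3 * A ω ^ 2 + 3 * (K ^ 2 * n) * Q ω) P := hi1.add hi2
    refine (integral_mono_of_nonneg (ae_of_all _ fun ω => sq_nonneg _) (hi12.add hi3)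
      (ae_of_all _ hpt)).trans ?_
    have hval : ∫ ω, (3 * A ω ^ 2 + 3 * (K ^ 2 * n) * Q ω +
        3 * (R n ω - I ω) ^ 2) ∂P = 3 * ∫ ω, A ω ^ 2 ∂P +
        3 * (K ^ 2 * n) * (n * ((1 / n) ^ 3 * M6)) + 3 * ∫ ω, (R n ω - I ω) ^ 2 ∂P := by
      rw [integral_add hi12 hi3, integral_add hi1 hi2, integral_const_mul, integral_const_mul,
        integral_const_mul, hQv]
    refine hval.le.trans ?_
    have e1 : 3 * (K ^ 2 * n) * (n * ((1 / (n:ℝ)) ^ 3 * M6)) = 3 * (K ^ 2 * M6 * (1 / n)) := by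
      field_simp
    have e2 : (n:ℝ) * (C ^ 2 * (2 * M4 + 2) * (1 / n) ^ 2) = C ^ 2 * (2 * M4 + 2) * (1 / n) := by
      field_simp
    rw [e2] at hAb
    rw [e1]
    linarith
  have hlim : Tendsto (fun n : ℕ => 3 * (C ^ 2 * (2 * M4 + 2) * (1 / (n:ℝ)))
      + 3 * (K ^ 2 * M6 * (1 / (n:ℝ))) + 3 * ∫ ω, (R n ω - I ω) ^ 2 ∂P) atTop (nhds 0) := by
    have h1 := tendsto_one_div_atTop_nhds_zero_nat (𝕜 := ℝ)
    have := (((h1.const_mul (C ^ 2 * (2 * M4 + 2))).const_mul 3).add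
      ((h1.const_mul (K ^ 2 * M6)).const_mul 3)).add (hElim.const_mul 3)
    simpa using this
  refine squeeze_zero' (Eventually.of_forall fun n => integral_nonneg fun ω => sq_nonneg _)
    ?_ hlim
  filter_upwards [eventually_gt_atTop 0] with n hn
  exact hbound n hn
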